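/- Let (X,d) be a complete separable metric space, p ≥ 1, C > 0 and ε > 0, let μ, ν be finite Borel measures on X, and let P : X → X be a Borel measurable map with d(x, P(x)) ≤ ε for all x ∈ X. Then KR_{p,C}(μ,ν)^p ≤ 3^{p−1}·( KR_{p,C}(P_#μ, P_#ν)^p + (m_μ + m_ν)·min(C,ε)^p ), where P_#μ denotes the pushforward of μ under P. -/

import Mathlib

/-!
The case of main interest is `ε ≤ C`. Disintegrating `μ` and `ν` along the fibres of `P`
(`exists_fiber_kernel`, available because `X` is standard Borel) allows a sub-coupling `π'` of
`(P_#μ, P_#ν)` to be lifted to a sub-coupling `π` of `(μ, ν)` of the same mass, by spreading the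
mass at `(x', y')` as a product measure over `P⁻¹ {x'} × P⁻¹ {y'}` (`exists_lift`). On the support
of this product `d(x, y) ≤ d(x', y') + 2 ε`, so convexity of `t ↦ t ^ p` bounds the transport cost
of `π` by `3 ^ (p - 1)` times that of `π'` plus `2 m_{π'} ε ^ p`, and
`2 m_{π'} ≤ m_μ + m_ν`. The mass penalty is unchanged since the masses agree.
If `C < ε`, the zero plan already costs only `C ^ p (m_μ + m_ν) / 2`.
-/

open MeasureTheory ENNReal

noncomputable section

variable {X : Type*} [MetricSpace X] [MeasurableSpace X]

/-- `π` is a sub-coupling of `(μ, ν)`: it puts at most `μ`-mass on `A × X` and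
at most `ν`-mass on `X × B`, for all Borel sets `A, B`. -/
def IsSubcoupling (μ ν : Measure X) (π : Measure (X × X)) : Prop :=
  (∀ A : Set X, MeasurableSet A → π (A ×ˢ (Set.univ : Set X)) ≤ μ A) ∧
  (∀ B : Set X, MeasurableSet B → π ((Set.univ : Set X) ×ˢ B) ≤ ν B)

/-- The objective of the `(p,C)`-Kantorovich–Rubinstein problem at a plan `π`:
`∫ d(x,y)^p dπ + C^p ((m_μ + m_ν)/2 − m_π)`. -/
def KRcost (p C : ℝ) (μ ν : Measure X) (π : Measure (X × X)) : ℝ≥0∞ :=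
  (∫⁻ z, ENNReal.ofReal (dist z.1 z.2 ^ p) ∂π) +
    ENNReal.ofReal (C ^ p) * ((μ Set.univ + ν Set.univ) / 2 - π Set.univ)

/-- `KR_{p,C}(μ,ν)^p`, the infimum of the Kantorovich–Rubinstein objective over
all sub-couplings of `(μ, ν)`. -/
def KRpow (p C : ℝ) (μ ν : Measure X) : ℝ≥0∞ :=
  ⨅ (π : Measure (X × X)) (_ : IsSubcoupling μ ν π), KRcost p C μ ν π

/-- The `(p,C)`-Kantorovich–Rubinstein distance. -/
def KR (p C : ℝ) (μ ν : Measure X) : ℝ :=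
  (KRpow p C μ ν).toReal ^ (1 / p)

open ProbabilityTheory in
/-- The disintegration of `μ` along the fibres of `P`: a Markov kernel whose value at
`P_#μ`-almost every `x'` is concentrated on `P⁻¹ {x'}`, and whose average over `P_#μ` is `μ`. -/
lemma exists_fiber_kernel [StandardBorelSpace X] [BorelSpace X]
    [SecondCountableTopology X] [Nonempty X]
    (μ : Measure X) [IsFiniteMeasure μ] {P : X → X} (hP : Measurable P) :
    ∃ κ : Kernel X X, IsMarkovKernel κ ∧
      (∀ A, MeasurableSet A → ∫⁻ x, κ x A ∂(μ.map P) = μ A) ∧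
      ∀ᵐ x' ∂(μ.map P), ∀ᵐ x ∂(κ x'), P x = x' := by
  -- disintegrate the law of `(P x, x)` over its first marginal `P_#μ`
  have hm : Measurable fun x : X => (P x, x) := hP.prodMk measurable_id
  set ρ : Measure (X × X) := μ.map fun x => (P x, x) with hρ
  have hfst : ρ.fst = μ.map P := by
    rw [Measure.fst, hρ, Measure.map_map measurable_fst hm]; rfl
  have hdis : (μ.map P) ⊗ₘ ρ.condKernel = ρ := hfst ▸ ρ.disintegrate ρ.condKernel
  refine ⟨ρ.condKernel, inferInstance, fun A hA => ?_, ?_⟩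
  · have h := congrArg (fun m : Measure (X × X) => m (Set.univ ×ˢ A)) hdis
    simp only [Measure.compProd_apply_prod MeasurableSet.univ hA, Measure.restrict_univ] at h
    rw [h, hρ, Measure.map_apply hm (MeasurableSet.univ.prod hA)]
    congr 1
    ext x
    simp
  · have hae : ∀ᵐ z ∂ρ, P z.2 = z.1 := by
      rw [hρ, ae_map_iff hm.aemeasurable
        (measurableSet_eq_fun (by fun_prop) measurable_fst)]
      exact ae_of_all _ fun _ => rfl
    rw [← hdis] at hae
    exact Measure.ae_ae_of_ae_compProd hae

/-- The convexity bound behind the constant `3 ^ (p - 1)`. -/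
lemma ofReal_dist_rpow_le {E : Type*} [MetricSpace E] {p ε : ℝ} (hp : 1 ≤ p) (hε : 0 < ε)
    {x y x' y' : E}
    (hx : dist x x' ≤ ε) (hy : dist y y' ≤ ε) :
    ENNReal.ofReal (dist x y ^ p) ≤ ENNReal.ofReal ((3 : ℝ) ^ (p - 1)) *
      (ENNReal.ofReal (dist x' y' ^ p) + 2 * ENNReal.ofReal (ε ^ p)) := by
  have h3 : dist x y ≤ dist x' y' + ε + ε := by
    have h1 := dist_triangle4 x x' y' y
    rw [dist_comm y' y] at h1
    linarith
  have hpow := Real.rpow_sum_le_const_mul_sum_rpow_of_nonneg (Finset.univ : Finset (Fin 3))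
    (f := ![dist x' y', ε, ε]) hp (by
      intro i _
      fin_cases i <;> simp [hε.le])
  simp only [Fin.sum_univ_three, Finset.card_univ, Fintype.card_fin, Nat.cast_ofNat,
    Matrix.cons_val_zero, Matrix.cons_val_one, Matrix.cons_val] at hpow
  have h2 : (2 : ℝ≥0∞) = ENNReal.ofReal 2 := by simp
  rw [h2, ← ENNReal.ofReal_mul (by norm_num), ← ENNReal.ofReal_add (by positivity) (by positivity),
    ← ENNReal.ofReal_mul (by positivity)]
  refine ENNReal.ofReal_le_ofReal ?_
  calc dist x y ^ p ≤ (dist x' y' + ε + ε) ^ p :=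
        Real.rpow_le_rpow dist_nonneg h3 (by linarith)
    _ ≤ _ := hpow
    _ = _ := by ring

lemma KRpow_le_zero_plan (p C : ℝ) (μ ν : Measure X) :
    KRpow p C μ ν ≤ ENNReal.ofReal (C ^ p) * ((μ Set.univ + ν Set.univ) / 2) := by
  refine (iInf₂_le (0 : Measure (X × X)) ⟨by simp, by simp⟩).trans ?_
  simp [KRcost]

lemma KRpow_ne_top (p C : ℝ) (μ ν : Measure X) [IsFiniteMeasure μ] [IsFiniteMeasure ν] :
    KRpow p C μ ν ≠ ∞ := by
  refine ne_top_of_le_ne_top ?_ (KRpow_le_zero_plan p C μ ν)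
  exact ENNReal.mul_ne_top ENNReal.ofReal_ne_top
    (ENNReal.div_ne_top (by simp [measure_ne_top]) (by norm_num))

lemma IsSubcoupling.map_fst_le {μ ν : Measure X} {π : Measure (X × X)}
    (hπ : IsSubcoupling μ ν π) : π.map Prod.fst ≤ μ := by
  refine Measure.le_iff.2 fun A hA => ?_
  rw [Measure.map_apply measurable_fst hA, ← Set.prod_univ]
  exact hπ.1 A hA

lemma IsSubcoupling.map_snd_le {μ ν : Measure X} {π : Measure (X × X)}
    (hπ : IsSubcoupling μ ν π) : π.map Prod.snd ≤ ν := by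
  refine Measure.le_iff.2 fun A hA => ?_
  rw [Measure.map_apply measurable_snd hA, ← Set.univ_prod]
  exact hπ.2 A hA

lemma IsSubcoupling.mass_le {μ ν : Measure X} {π : Measure (X × X)}
    (hπ : IsSubcoupling μ ν π) : 2 * π Set.univ ≤ μ Set.univ + ν Set.univ := by
  have h1 := hπ.1 Set.univ MeasurableSet.univ
  have h2 := hπ.2 Set.univ MeasurableSet.univ
  rw [Set.univ_prod_univ] at h1 h2
  rw [two_mul]
  exact add_le_add h1 h2

open ProbabilityTheory in
/-- A sub-coupling `π'` of the pushforwards lifts to a sub-coupling of `(μ, ν)` of the same mass,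
by spreading the mass at `(x', y')` as the product of the fibre measures above `x'` and `y'`.
Each coordinate moves by at most `ε`, which controls the transport cost of the lift. -/
lemma exists_lift [StandardBorelSpace X] [BorelSpace X]
    [SecondCountableTopology X] [Nonempty X] {p ε : ℝ} (hp : 1 ≤ p) (hε : 0 < ε)
    (μ ν : Measure X) [IsFiniteMeasure μ] [IsFiniteMeasure ν] {P : X → X} (hP : Measurable P)
    (hclose : ∀ x, dist x (P x) ≤ ε) {π' : Measure (X × X)}
    (hπ' : IsSubcoupling (μ.map P) (ν.map P) π') :
    ∃ π, IsSubcoupling μ ν π ∧ π Set.univ = π' Set.univ ∧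
      ∫⁻ z, ENNReal.ofReal (dist z.1 z.2 ^ p) ∂π ≤ ENNReal.ofReal ((3 : ℝ) ^ (p - 1)) *
        (∫⁻ z, ENNReal.ofReal (dist z.1 z.2 ^ p) ∂π' +
          2 * ENNReal.ofReal (ε ^ p) * π' Set.univ) := by
  obtain ⟨κ, hκ, hκμ, hκae⟩ := exists_fiber_kernel μ hP
  obtain ⟨η, hη, hην, hηae⟩ := exists_fiber_kernel ν hP
  let L : Kernel (X × X) (X × X) :=
    (κ.comap Prod.fst measurable_fst) ×ₖ (η.comap Prod.snd measurable_snd)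
  have hL : ∀ z, L z = (κ z.1).prod (η z.2) := fun z => by
    simp [L, Kernel.prod_apply, Kernel.comap_apply]
  have hbind : ∀ S, MeasurableSet S → (π'.bind L) S = ∫⁻ z, (κ z.1).prod (η z.2) S ∂π' :=
    fun S hS => by
      rw [Measure.bind_apply hS L.measurable.aemeasurable]
      simp only [hL]
  refine ⟨π'.bind L, ⟨fun A hA => ?_, fun B hB => ?_⟩, ?_, ?_⟩
  · rw [hbind _ (hA.prod MeasurableSet.univ)]
    simp only [Measure.prod_prod, measure_univ, mul_one]
    rw [← hκμ A hA, ← lintegral_map (κ.measurable_coe hA) measurable_fst]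
    exact lintegral_mono' hπ'.map_fst_le le_rfl
  · rw [hbind _ (MeasurableSet.univ.prod hB)]
    simp only [Measure.prod_prod, measure_univ, one_mul]
    rw [← hην B hB, ← lintegral_map (η.measurable_coe hB) measurable_snd]
    exact lintegral_mono' hπ'.map_snd_le le_rfl
  · rw [hbind _ MeasurableSet.univ]
    simp
  · have hd : Measurable fun z : X × X => ENNReal.ofReal (dist z.1 z.2 ^ p) := by fun_prop
    have hae : ∀ᵐ z ∂π', ∫⁻ w, ENNReal.ofReal (dist w.1 w.2 ^ p) ∂(L z) ≤
        ENNReal.ofReal ((3 : ℝ) ^ (p - 1)) *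
          (ENNReal.ofReal (dist z.1 z.2 ^ p) + 2 * ENNReal.ofReal (ε ^ p)) := by
      filter_upwards [ae_of_ae_map measurable_fst.aemeasurable (ae_mono hπ'.map_fst_le hκae),
        ae_of_ae_map measurable_snd.aemeasurable (ae_mono hπ'.map_snd_le hηae)] with z hz1 hz2
      rw [hL]
      have h1 : ∀ᵐ w ∂((κ z.1).prod (η z.2)), P w.1 = z.1 :=
        Measure.quasiMeasurePreserving_fst.ae hz1
      have h2 : ∀ᵐ w ∂((κ z.1).prod (η z.2)), P w.2 = z.2 :=
        Measure.quasiMeasurePreserving_snd.ae hz2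
      calc _ ≤ ∫⁻ _, ENNReal.ofReal ((3 : ℝ) ^ (p - 1)) *
          (ENNReal.ofReal (dist z.1 z.2 ^ p) + 2 * ENNReal.ofReal (ε ^ p))
            ∂((κ z.1).prod (η z.2)) := by
            refine lintegral_mono_ae ?_
            filter_upwards [h1, h2] with w hw1 hw2
            exact ofReal_dist_rpow_le hp hε (hw1 ▸ hclose w.1) (hw2 ▸ hclose w.2)
        _ = _ := by simp
    calc _ ≤ ∫⁻ z, ∫⁻ w, ENNReal.ofReal (dist w.1 w.2 ^ p) ∂(L z) ∂π' :=
          Measure.lintegral_bind_le _ _ _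
      _ ≤ _ := lintegral_mono_ae hae
      _ = _ := by
        rw [lintegral_const_mul _ (hd.add_const _), lintegral_add_left hd, lintegral_const]

/-- The main inequality in `ℝ≥0∞`. For `C < ε`, or for empty `X`, the zero plan suffices;
otherwise every plan between the pushforwards is lifted. -/
lemma KRpow_le [StandardBorelSpace X] [BorelSpace X] [SecondCountableTopology X]
    {p C ε : ℝ} (hp : 1 ≤ p) (hε : 0 < ε)
    (μ ν : Measure X) [IsFiniteMeasure μ] [IsFiniteMeasure ν] {P : X → X} (hP : Measurable P)
    (hclose : ∀ x, dist x (P x) ≤ ε) :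
    KRpow p C μ ν ≤ ENNReal.ofReal ((3 : ℝ) ^ (p - 1)) *
      (KRpow p C (μ.map P) (ν.map P) +
        (μ Set.univ + ν Set.univ) * ENNReal.ofReal ((min C ε) ^ p)) := by
  have h3 : 1 ≤ ENNReal.ofReal ((3 : ℝ) ^ (p - 1)) := by
    rw [ENNReal.one_le_ofReal]
    exact Real.one_le_rpow (by norm_num) (by linarith)
  cases isEmpty_or_nonempty X with
  | inl h =>
    refine (KRpow_le_zero_plan p C μ ν).trans ?_
    simp [Measure.eq_zero_of_isEmpty]
  | inr h =>
  rcases lt_or_ge C ε with hlt | hge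
  · rw [min_eq_left hlt.le]
    calc KRpow p C μ ν ≤ ENNReal.ofReal (C ^ p) * ((μ Set.univ + ν Set.univ) / 2) :=
          KRpow_le_zero_plan p C μ ν
      _ ≤ ENNReal.ofReal (C ^ p) * (μ Set.univ + ν Set.univ) := by
          gcongr
          exact ENNReal.half_le_self
      _ ≤ KRpow p C (μ.map P) (ν.map P) +
            (μ Set.univ + ν Set.univ) * ENNReal.ofReal (C ^ p) := by
          rw [mul_comm]
          exact le_add_self
      _ ≤ _ := le_mul_of_one_le_left' h3
  · rw [min_eq_right hge]
    have hmμ : (μ.map P) Set.univ = μ Set.univ := by simp [Measure.map_apply hP]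
    have hmν : (ν.map P) Set.univ = ν Set.univ := by simp [Measure.map_apply hP]
    conv_rhs => rw [KRpow]
    simp only [ENNReal.iInf_add]
    rw [ENNReal.mul_iInf_of_ne (by positivity) ENNReal.ofReal_ne_top]
    refine le_iInf fun π' => ?_
    rw [ENNReal.mul_iInf_of_ne (by positivity) ENNReal.ofReal_ne_top]
    refine le_iInf fun hπ' => ?_
    obtain ⟨π, hπ, hmass, hcost⟩ := exists_lift hp hε μ ν hP hclose hπ'
    refine (iInf₂_le π hπ).trans ?_
    have hm := hπ'.mass_le
    rw [hmμ, hmν] at hm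
    rw [KRcost, KRcost, hmass, hmμ, hmν]
    set T := ENNReal.ofReal ((3 : ℝ) ^ (p - 1))
    set R := ENNReal.ofReal (C ^ p) * ((μ Set.univ + ν Set.univ) / 2 - π' Set.univ)
    set I := ∫⁻ z, ENNReal.ofReal (dist z.1 z.2 ^ p) ∂π'
    set e := ENNReal.ofReal (ε ^ p)
    calc _ ≤ T * (I + 2 * e * π' Set.univ) + T * R := add_le_add hcost (le_mul_of_one_le_left' h3)
      _ = T * (I + R + 2 * π' Set.univ * e) := by ring
      _ ≤ _ := by gcongr

/-- Discrete approximation bound: if `P` moves every point by at most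
`ε`, then `KR_{p,C}(μ,ν)^p ≤ 3^{p−1}·(KR_{p,C}(P_#μ, P_#ν)^p + (m_μ + m_ν)·min(C,ε)^p)`. -/
theorem statement15 [CompleteSpace X] [TopologicalSpace.SeparableSpace X] [BorelSpace X]
    (p C ε : ℝ) (hp : 1 ≤ p) (hC : 0 < C) (hε : 0 < ε)
    (μ ν : Measure X) [IsFiniteMeasure μ] [IsFiniteMeasure ν]
    (Pmap : X → X) (hPmeas : Measurable Pmap) (hPclose : ∀ x : X, dist x (Pmap x) ≤ ε) :
    KR p C μ ν ^ p ≤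
      (3 : ℝ) ^ (p - 1) *
        (KR p C (μ.map Pmap) (ν.map Pmap) ^ p +
          ((μ Set.univ).toReal + (ν Set.univ).toReal) * (min C ε) ^ p) := by
  have : SecondCountableTopology X := UniformSpace.secondCountable_of_separable X
  have : PolishSpace X := inferInstance
  have hp0 : p ≠ 0 := by linarith
  have hKR : ∀ m n : Measure X, KR p C m n ^ p = (KRpow p C m n).toReal := fun m n => by
    rw [KR, ← Real.rpow_mul ENNReal.toReal_nonneg, one_div_mul_cancel hp0, Real.rpow_one]
  rw [hKR, hKR]
  have hmin : 0 ≤ (min C ε) ^ p := Real.rpow_nonneg (le_min hC.le hε.le) p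
  have hK := KRpow_ne_top p C (μ.map Pmap) (ν.map Pmap)
  have hM : (μ Set.univ + ν Set.univ) * ENNReal.ofReal ((min C ε) ^ p) ≠ ∞ :=
    ENNReal.mul_ne_top (by simp [measure_ne_top]) ENNReal.ofReal_ne_top
  have h := ENNReal.toReal_mono
    (ENNReal.mul_ne_top ENNReal.ofReal_ne_top (ENNReal.add_ne_top.2 ⟨hK, hM⟩))
    (KRpow_le hp hε μ ν hPmeas hPclose)
  rwa [ENNReal.toReal_mul, ENNReal.toReal_add hK hM, ENNReal.toReal_mul,
    ENNReal.toReal_add (measure_ne_top _ _) (measure_ne_top _ _),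
    ENNReal.toReal_ofReal hmin, ENNReal.toReal_ofReal (by positivity)] at h
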